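/- Let t₀ > 0, let η be a nonatomic finite Borel measure on [0, t₀] with total mass a = η([0, t₀]) > 0, and let c : [0, t₀] → (0, ∞) be continuous. On a probability space, let (θᵢ)_{i≥1} be i.i.d. random variables with law Π = η/a, and let (Eᵢ)_{i≥1} be i.i.d. exponential random variables with mean 1, independent of (θᵢ)_{i≥1}; set Γᵢ = E₁ + ⋯ + Eᵢ. Define A_n(t) = Σ_{i=1}^n L_{n,θᵢ}^{−1}(Γᵢ/(a n)) · 1{θᵢ ≤ t} for t ∈ [0, t₀] (with the convention L_{n,z}^{−1}(p) = 0 when p ≥ 1), and A(t) = Σ_{i=1}^∞ M_{θᵢ}^{−1}(Γᵢ) · 1{θᵢ ≤ t}. Then almost surely: the series defining A(t) converges for every t ∈ [0, t₀], and A_n converges vaguely to A as n → ∞, i.e., A_n(t) → A(t) for every t ∈ [0, t₀] at which the nondecreasing function A is continuous. -/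

import Mathlib

open MeasureTheory Filter Set

/-- `L_{n,z}(x)` with concentration value `c`:
`[Γ(c)/(Γ(c/n)Γ(c-c/n))] ∫_x^1 s^{c/n-1} (1-s)^{c(1-1/n)-1} ds`. -/
noncomputable def Lfun (c : ℝ) (n : ℕ) (x : ℝ) : ℝ :=
  Real.Gamma c / (Real.Gamma (c / n) * Real.Gamma (c - c / n)) *
    ∫ s in Ioo x 1, s ^ (c / n - 1) * (1 - s) ^ (c * (1 - 1 / (n : ℝ)) - 1)

/-- `M_z(x)` with concentration value `c` and total mass `a`:
`a c ∫_x^1 s^{-1} (1-s)^{c-1} ds`. -/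
noncomputable def Mfun (c a : ℝ) (x : ℝ) : ℝ :=
  a * c * ∫ s in Ioo x 1, s ^ (-1 : ℝ) * (1 - s) ^ (c - 1)

/-!
Since `u Γ(u) = Γ(u + 1)`, the rescaled function `n L_{n,z}` is the value at `u = c(z) / n` of a
function `H(c(z), u, ·)` (`scaledBetaTail` below) that is continuous in `u` down to `u = 0`, where
it equals `M_z / a`. Hence `n L_{n,z} → M_z / a` pointwise and, all these functions being strictly
decreasing, `L_{n,z}⁻¹(γ / (a n)) → M_z⁻¹(γ)`. Moreover `H(c, u, x) ≤ C / √x` uniformly in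
`u ≤ c / 2` and in `c` in a compact subset of `(0, ∞)`, so that both inverses are at most
`(C a / γ)²`. By the strong law of large numbers `Γᵢ` almost surely grows linearly in `i`; the
resulting bound `O(i⁻²)` on the jumps makes the series summable and lets the limit `n → ∞` be taken
termwise.
-/

open scoped Topology

section Limits

lemma exists_pos_forall_mem_Icc_of_isCompact {X : Type*} [TopologicalSpace X] {s : Set X}
    {f : X → ℝ} (hs : IsCompact s) (hf : ContinuousOn f s) (hpos : ∀ x ∈ s, 0 < f x) :
    ∃ m M : ℝ, 0 < m ∧ ∀ x ∈ s, f x ∈ Icc m M := by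
  obtain ⟨m, hm, hmf⟩ := hs.exists_forall_le' hf hpos
  obtain ⟨M, hM⟩ := hs.bddAbove_image hf
  exact ⟨m, M, hm, fun x hx ↦ ⟨hmf x hx, hM (mem_image_of_mem f hx)⟩⟩

lemma tendsto_of_tendsto_apply_of_strictAntiOn {ι α β : Type*} {l : Filter ι}
    [LinearOrder α] [TopologicalSpace α] [OrderTopology α] [DenselyOrdered α]
    [LinearOrder β] [TopologicalSpace β] [OrderClosedTopology β]
    {s : Set α} {F : ι → α → β} {f : α → β} {Y : ι → α} {y : α} (hs : s ∈ 𝓝 y)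
    (hF : ∀ᶠ n in l, AntitoneOn (F n) s) (hf : StrictAntiOn f s)
    (hFf : ∀ x ∈ s, Tendsto (fun n ↦ F n x) l (𝓝 (f x))) (hY : ∀ᶠ n in l, Y n ∈ s)
    (hFY : Tendsto (fun n ↦ F n (Y n)) l (𝓝 (f y))) :
    Tendsto Y l (𝓝 y) := by
  refine tendsto_order.2 ⟨fun b hb ↦ ?_, fun b hb ↦ ?_⟩
  · have := nhdsLT_neBot_of_exists_lt ⟨b, hb⟩
    obtain ⟨x, hxs, hbx, hxy⟩ : ∃ x ∈ s, b < x ∧ x < y :=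
      nonempty_of_mem (inter_mem (mem_nhdsWithin_of_mem_nhds hs) (Ioo_mem_nhdsLT hb))
    have hfx : f y < f x := hf hxs (mem_of_mem_nhds hs) hxy
    filter_upwards [hF, hY, hFY.eventually_lt (hFf x hxs) hfx] with n hFn hYn hlt
    exact hbx.trans (lt_of_not_ge fun hle ↦ hlt.not_ge (hFn hYn hxs hle))
  · have := nhdsGT_neBot_of_exists_gt ⟨b, hb⟩
    obtain ⟨x, hxs, hyx, hxb⟩ : ∃ x ∈ s, y < x ∧ x < b :=
      nonempty_of_mem (inter_mem (mem_nhdsWithin_of_mem_nhds hs) (Ioo_mem_nhdsGT hb))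
    have hfx : f x < f y := hf (mem_of_mem_nhds hs) hxs hyx
    filter_upwards [hF, hY, (hFf x hxs).eventually_lt hFY hfx] with n hFn hYn hlt
    exact (lt_of_not_ge fun hle ↦ hlt.not_ge (hFn hxs hYn hle)).trans hxb

lemma tendsto_sum_range_of_dominated {V : Type*} [NormedAddCommGroup V] [CompleteSpace V]
    {f : ℕ → ℕ → V} {g : ℕ → V} {bound : ℕ → ℝ} (hbound : Summable bound)
    (hfg : ∀ i, Tendsto (fun n ↦ f n i) atTop (𝓝 (g i)))
    (hf : ∀ᶠ n in atTop, ∀ i, ‖f n i‖ ≤ bound i) :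
    Tendsto (fun n ↦ ∑ i ∈ Finset.range n, f n i) atTop (𝓝 (∑' i, g i)) := by
  simp_rw [fun n ↦ sum_eq_tsum_indicator (f n) (Finset.range n)]
  refine tendsto_tsum_of_dominated_convergence hbound (fun i ↦ (hfg i).congr' ?_) ?_
  · filter_upwards [eventually_gt_atTop i] with n hn
    rw [indicator_of_mem (by simpa using hn)]
  · filter_upwards [hf] with n hn i
    exact (norm_indicator_le_norm_self _ _).trans (hn i)

lemma summable_div_sq_of_eventually_mul_le {γ : ℕ → ℝ} {δ : ℝ} (C : ℝ) (hδ : 0 < δ)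
    (hγ : ∀ᶠ n : ℕ in atTop, δ * n ≤ γ n) : Summable fun n ↦ (C / γ n) ^ 2 := by
  have hsum : Summable fun n : ℕ ↦ (C / δ) ^ 2 * (1 / (n : ℝ) ^ 2) :=
    (Real.summable_one_div_nat_pow.2 one_lt_two).mul_left _
  refine Summable.of_norm_bounded_eventually_nat hsum ?_
  filter_upwards [hγ, eventually_gt_atTop 0] with n hn hn0
  calc ‖(C / γ n) ^ 2‖ = C ^ 2 / γ n ^ 2 := by rw [Real.norm_of_nonneg (sq_nonneg _), div_pow]
    _ ≤ C ^ 2 / (δ * n) ^ 2 := by gcongr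
    _ = (C / δ) ^ 2 * (1 / (n : ℝ) ^ 2) := by field_simp

end Limits

section BetaTail

variable {u u' v v' r s x : ℝ}

/-- The density `s^{u-1} (1-s)^{v-1}` of the beta integral with parameters `u` and `v`. -/
noncomputable def betaKernel (u v s : ℝ) : ℝ :=
  s ^ (u - 1) * (1 - s) ^ (v - 1)

/-- The upper incomplete beta integral `∫_x^1 s^{u-1} (1-s)^{v-1} ds`. It is meaningful for `0 < x`
and `0 < v`, where `u` may be any real number, and for `x = 0` if moreover `0 < u`. -/
noncomputable def betaTail (u v x : ℝ) : ℝ :=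
  ∫ s in Ioo x 1, betaKernel u v s

lemma measurable_betaKernel : Measurable (betaKernel u v) := by
  unfold betaKernel
  fun_prop

lemma betaKernel_pos (hs : s ∈ Ioo 0 1) : 0 < betaKernel u v s :=
  mul_pos (Real.rpow_pos_of_pos hs.1 _) (Real.rpow_pos_of_pos (sub_pos.2 hs.2) _)

lemma betaKernel_le_betaKernel (hs : s ∈ Ioo 0 1) (hu : u ≤ u') (hv : v ≤ v') :
    betaKernel u' v' s ≤ betaKernel u v s := by
  have hs1 : 0 < 1 - s := sub_pos.2 hs.2
  have hleft : s ^ (u' - 1) ≤ s ^ (u - 1) :=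
    Real.rpow_le_rpow_of_exponent_ge hs.1 hs.2.le (by linarith)
  have hright : (1 - s) ^ (v' - 1) ≤ (1 - s) ^ (v - 1) :=
    Real.rpow_le_rpow_of_exponent_ge hs1 (by linarith [hs.1]) (by linarith)
  exact mul_le_mul hleft hright (Real.rpow_nonneg hs1.le _) (Real.rpow_nonneg hs.1.le _)

lemma betaKernel_le_rpow_neg_mul (hx : 0 < x) (hs : s ∈ Ioo x 1) (hr : 0 ≤ r) :
    betaKernel u v s ≤ x ^ (-r) * betaKernel (u + r) v s := by
  have hs0 : 0 < s := hx.trans hs.1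
  have hsplit : betaKernel u v s = s ^ (-r) * betaKernel (u + r) v s := by
    rw [betaKernel, betaKernel, ← mul_assoc, ← Real.rpow_add hs0]
    ring_nf
  rw [hsplit]
  exact mul_le_mul_of_nonneg_right (Real.rpow_le_rpow_of_nonpos hx hs.1.le (neg_nonpos.2 hr))
    (betaKernel_pos ⟨hs0, hs.2⟩).le

lemma integrableOn_betaKernel_Ioo_zero_one (hu : 0 < u) (hv : 0 < v) :
    IntegrableOn (betaKernel u v) (Ioo 0 1) := by
  have h := Complex.betaIntegral_convergent (u := u) (v := v) (by simpa) (by simpa)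
  rw [intervalIntegrable_iff_integrableOn_Ioo_of_le zero_le_one] at h
  refine IntegrableOn.congr_fun h.norm (fun s hs ↦ ?_) measurableSet_Ioo
  have hs1 : 0 < 1 - s := sub_pos.2 hs.2
  simp only [norm_mul, betaKernel]
  rw [← Complex.ofReal_one, ← Complex.ofReal_sub, ← Complex.ofReal_sub, ← Complex.ofReal_sub,
    Complex.norm_cpow_eq_rpow_re_of_pos hs.1, Complex.norm_cpow_eq_rpow_re_of_pos hs1,
    Complex.ofReal_re, Complex.ofReal_re]

lemma integrableOn_betaKernel (hv : 0 < v) (hx : 0 < x) :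
    IntegrableOn (betaKernel u v) (Ioo x 1) := by
  have hr : 0 < u + (|u| + 1) := by linarith [neg_abs_le u]
  have hdom : IntegrableOn (fun s ↦ x ^ (-(|u| + 1)) * betaKernel (u + (|u| + 1)) v s) (Ioo x 1) :=
    ((integrableOn_betaKernel_Ioo_zero_one hr hv).mono_set (Ioo_subset_Ioo_left hx.le)).const_mul _
  refine Integrable.mono' hdom measurable_betaKernel.aestronglyMeasurable ?_
  filter_upwards [ae_restrict_mem measurableSet_Ioo] with s hs
  rw [Real.norm_of_nonneg (betaKernel_pos ⟨hx.trans hs.1, hs.2⟩).le]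
  exact betaKernel_le_rpow_neg_mul hx hs (by positivity)

lemma betaTail_nonneg (hx : 0 ≤ x) : 0 ≤ betaTail u v x :=
  setIntegral_nonneg measurableSet_Ioo fun _ hs ↦ (betaKernel_pos ⟨hx.trans_lt hs.1, hs.2⟩).le

lemma betaTail_le_betaTail (hu : u ≤ u') (hv : v ≤ v') (hv0 : 0 < v) (hx : 0 < x) :
    betaTail u' v' x ≤ betaTail u v x :=
  setIntegral_mono_on (integrableOn_betaKernel (hv0.trans_le hv) hx)
    (integrableOn_betaKernel hv0 hx) measurableSet_Ioo
    fun _ hs ↦ betaKernel_le_betaKernel ⟨hx.trans hs.1, hs.2⟩ hu hv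

lemma betaTail_le_rpow_neg_mul (hr : 0 ≤ r) (hur : 0 < u + r) (hv : 0 < v) (hx : 0 < x) :
    betaTail u v x ≤ x ^ (-r) * betaTail (u + r) v 0 := by
  have hint := integrableOn_betaKernel_Ioo_zero_one hur hv
  have hsub : Ioo x 1 ⊆ Ioo 0 1 := Ioo_subset_Ioo_left hx.le
  calc betaTail u v x
      ≤ ∫ s in Ioo x 1, x ^ (-r) * betaKernel (u + r) v s :=
        setIntegral_mono_on (integrableOn_betaKernel hv hx) ((hint.mono_set hsub).const_mul _)
          measurableSet_Ioo fun s hs ↦ betaKernel_le_rpow_neg_mul hx hs hr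
    _ = x ^ (-r) * betaTail (u + r) v x := integral_const_mul _ _
    _ ≤ x ^ (-r) * betaTail (u + r) v 0 := by
        refine mul_le_mul_of_nonneg_left ?_ (Real.rpow_nonneg hx.le _)
        refine setIntegral_mono_set hint ?_ hsub.eventuallyLE
        filter_upwards [ae_restrict_mem measurableSet_Ioo] with s hs
        exact (betaKernel_pos hs).le

lemma strictAntiOn_betaTail (hv : 0 < v) : StrictAntiOn (betaTail u v) (Ioo 0 1) := by
  intro x hx y hy hxy
  have hsub : Ioc x y ⊆ Ioo x 1 := fun s hs ↦ ⟨hs.1, hs.2.trans_lt hy.2⟩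
  have hint : IntegrableOn (betaKernel u v) (Ioo x 1) := integrableOn_betaKernel hv hx.1
  have hpos : ∀ s ∈ Ioc x y, 0 < betaKernel u v s := fun s hs ↦
    betaKernel_pos ⟨hx.1.trans hs.1, (hsub hs).2⟩
  have hdiff : betaTail u v x = (∫ s in Ioc x y, betaKernel u v s) + betaTail u v y := by
    rw [betaTail, ← Ioc_union_Ioo_eq_Ioo hxy.le hy.2]
    exact setIntegral_union ((Ioc_disjoint_Ioi le_rfl).mono_right Ioo_subset_Ioi_self)
      measurableSet_Ioo (hint.mono_set hsub) (integrableOn_betaKernel hv hy.1)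
  have hgap : 0 < ∫ s in Ioc x y, betaKernel u v s := by
    rw [← intervalIntegral.integral_of_le hxy.le]
    exact intervalIntegral.intervalIntegral_pos_of_pos_on
      ((intervalIntegrable_iff_integrableOn_Ioc_of_le hxy.le).2 (hint.mono_set hsub))
      (fun s hs ↦ hpos s (Ioo_subset_Ioc_self hs)) hxy
  linarith

lemma continuousAt_betaTail (hv : 0 < v) (hx : 0 < x) :
    ContinuousAt (fun p : ℝ × ℝ ↦ betaTail p.1 p.2 x) (u, v) := by
  refine continuousAt_of_dominated (bound := betaKernel (u - 1) (v / 2))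
    (Eventually.of_forall fun p ↦ measurable_betaKernel.aestronglyMeasurable) ?_
    (integrableOn_betaKernel (half_pos hv) hx) ?_
  · have hu : ∀ᶠ p : ℝ × ℝ in 𝓝 (u, v), u - 1 < p.1 :=
      continuousAt_fst.eventually_const_lt (sub_one_lt u)
    have hv : ∀ᶠ p : ℝ × ℝ in 𝓝 (u, v), v / 2 < p.2 :=
      continuousAt_snd.eventually_const_lt (half_lt_self hv)
    filter_upwards [hu, hv] with p hpu hpv
    filter_upwards [ae_restrict_mem measurableSet_Ioo] with s hs
    have hs01 : s ∈ Ioo 0 1 := ⟨hx.trans hs.1, hs.2⟩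
    rw [Real.norm_of_nonneg (betaKernel_pos hs01).le]
    exact betaKernel_le_betaKernel hs01 hpu.le hpv.le
  · filter_upwards [ae_restrict_mem measurableSet_Ioo] with s hs
    have hs0 : s ≠ 0 := (hx.trans hs.1).ne'
    have hs1 : 1 - s ≠ 0 := (sub_pos.2 hs.2).ne'
    exact ((continuous_const.rpow (by fun_prop) fun _ ↦ Or.inl hs0).mul
      (continuous_const.rpow (by fun_prop) fun _ ↦ Or.inl hs1)).continuousAt

end BetaTail

section ScaledBetaTail

variable {c m M u x : ℝ}

/-- `c / u` times the upper tail at `x` of the Beta(`u`, `c - u`) distribution, written with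
`u Γ(u) = Γ(u + 1)` so that it makes sense at `u = 0`. It interpolates between `n L_{n,z}`,
at `u = c(z) / n`, and `M_z / a`, at `u = 0`. -/
noncomputable def scaledBetaTail (c u x : ℝ) : ℝ :=
  Real.Gamma (c + 1) / (Real.Gamma (u + 1) * Real.Gamma (c - u)) * betaTail u (c - u) x

lemma natCast_mul_Lfun (hc : 0 < c) {n : ℕ} (hn : n ≠ 0) :
    n * Lfun c n x = scaledBetaTail c (c / n) x := by
  have hn0 : (n : ℝ) ≠ 0 := Nat.cast_ne_zero.2 hn
  have hexp : c * (1 - 1 / (n : ℝ)) = c - c / n := by ring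
  rw [Lfun, scaledBetaTail, betaTail, Real.Gamma_add_one hc.ne',
    Real.Gamma_add_one (div_ne_zero hc.ne' hn0), hexp, ← mul_assoc]
  congr 1
  field_simp

lemma Mfun_eq_mul_scaledBetaTail (hc : 0 < c) (a : ℝ) :
    Mfun c a x = a * scaledBetaTail c 0 x := by
  have hΓ : Real.Gamma c ≠ 0 := (Real.Gamma_pos_of_pos hc).ne'
  have hcoef : Real.Gamma (c + 1) / (Real.Gamma (0 + 1) * Real.Gamma (c - 0)) = c := by
    rw [Real.Gamma_add_one hc.ne', zero_add, Real.Gamma_one, sub_zero, one_mul,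
      mul_div_cancel_right₀ _ hΓ]
  rw [scaledBetaTail, hcoef, ← mul_assoc]
  simp only [Mfun, betaTail, betaKernel, zero_sub, sub_zero]

lemma Gamma_div_Gamma_mul_Gamma_pos (hu : -1 < u) (huc : u < c) :
    0 < Real.Gamma (c + 1) / (Real.Gamma (u + 1) * Real.Gamma (c - u)) :=
  div_pos (Real.Gamma_pos_of_pos (by linarith))
    (mul_pos (Real.Gamma_pos_of_pos (by linarith)) (Real.Gamma_pos_of_pos (by linarith)))

lemma strictAntiOn_scaledBetaTail (hu : -1 < u) (huc : u < c) :
    StrictAntiOn (scaledBetaTail c u) (Ioo 0 1) :=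
  fun _ hx _ hy hxy ↦ mul_lt_mul_of_pos_left (strictAntiOn_betaTail (sub_pos.2 huc) hx hy hxy)
    (Gamma_div_Gamma_mul_Gamma_pos hu huc)

lemma continuousAt_Gamma_of_pos {s : ℝ} (hs : 0 < s) : ContinuousAt Real.Gamma s :=
  Real.differentiableOn_Gamma_Ioi.continuousOn.continuousAt (Ioi_mem_nhds hs)

lemma continuousAt_scaledBetaTail (hu : -1 < u) (huc : u < c) (hx : 0 < x) :
    ContinuousAt (fun w ↦ scaledBetaTail c w x) u := by
  have hΓ_left : ContinuousAt (fun w ↦ Real.Gamma (w + 1)) u :=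
    ContinuousAt.comp' (continuousAt_Gamma_of_pos (by linarith)) (by fun_prop)
  have hΓ_right : ContinuousAt (fun w ↦ Real.Gamma (c - w)) u :=
    ContinuousAt.comp' (continuousAt_Gamma_of_pos (by linarith)) (by fun_prop)
  have hΓ_ne : Real.Gamma (u + 1) * Real.Gamma (c - u) ≠ 0 :=
    (mul_pos (Real.Gamma_pos_of_pos (by linarith)) (Real.Gamma_pos_of_pos (by linarith))).ne'
  have htail : ContinuousAt (fun w ↦ betaTail w (c - w) x) u :=
    ContinuousAt.comp' (f := fun w ↦ (w, c - w)) (continuousAt_betaTail (sub_pos.2 huc) hx)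
      (by fun_prop)
  exact (continuousAt_const.div (hΓ_left.mul hΓ_right) hΓ_ne).mul htail

lemma tendsto_natCast_mul_Lfun (hc : 0 < c) (hx : 0 < x) :
    Tendsto (fun n : ℕ ↦ n * Lfun c n x) atTop (𝓝 (scaledBetaTail c 0 x)) := by
  refine ((continuousAt_scaledBetaTail neg_one_lt_zero hc hx).tendsto.comp
    (tendsto_const_div_atTop_nhds_zero_nat c)).congr' ?_
  filter_upwards [eventually_ne_atTop 0] with n hn
  exact (natCast_mul_Lfun hc hn).symm

lemma exists_Gamma_div_Gamma_mul_Gamma_le (hm : 0 < m) (M : ℝ) :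
    ∃ K, 0 < K ∧ ∀ c ∈ Icc m M, ∀ u ∈ Icc 0 (c / 2),
      Real.Gamma (c + 1) / (Real.Gamma (u + 1) * Real.Gamma (c - u)) ≤ K := by
  have hleft : 0 < min (m / 2) 1 := lt_min (half_pos hm) one_pos
  obtain ⟨l, U, hl, hΓ⟩ := exists_pos_forall_mem_Icc_of_isCompact
    (isCompact_Icc (a := min (m / 2) 1) (b := M + 1))
    (fun s hs ↦ (continuousAt_Gamma_of_pos (hleft.trans_le hs.1)).continuousWithinAt)
    (fun s hs ↦ Real.Gamma_pos_of_pos (hleft.trans_le hs.1))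
  refine ⟨max U 1 / (l * l), by positivity, fun c hc u hu ↦ ?_⟩
  obtain ⟨hmc, hcM⟩ := hc
  obtain ⟨hu0, huc⟩ := hu
  have hmin_half : min (m / 2) 1 ≤ m / 2 := min_le_left _ _
  have hmin_one : min (m / 2) 1 ≤ 1 := min_le_right _ _
  have hnum : Real.Gamma (c + 1) ≤ U := (hΓ _ ⟨by linarith, by linarith⟩).2
  have hden_left : l ≤ Real.Gamma (u + 1) := (hΓ _ ⟨by linarith, by linarith⟩).1
  have hden_right : l ≤ Real.Gamma (c - u) := (hΓ _ ⟨by linarith, by linarith⟩).1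
  gcongr
  exact hnum.trans (le_max_left _ _)

lemma exists_scaledBetaTail_le_div_sqrt (hm : 0 < m) (M : ℝ) :
    ∃ C, ∀ c ∈ Icc m M, ∀ u ∈ Icc 0 (c / 2), ∀ x, 0 < x →
      scaledBetaTail c u x ≤ C / √x := by
  obtain ⟨K, hK, hΓ⟩ := exists_Gamma_div_Gamma_mul_Gamma_le hm M
  refine ⟨K * betaTail (1 / 2) (m / 2) 0, fun c hc u hu x hx ↦ ?_⟩
  have hcu : m / 2 ≤ c - u := by linarith [hc.1, hu.2]
  calc scaledBetaTail c u x
      ≤ K * betaTail u (c - u) x :=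
        mul_le_mul_of_nonneg_right (hΓ c hc u hu) (betaTail_nonneg hx.le)
    _ ≤ K * betaTail 0 (m / 2) x := by
        gcongr
        exact betaTail_le_betaTail hu.1 hcu (half_pos hm) hx
    _ ≤ K * (x ^ (-(1 / 2) : ℝ) * betaTail (0 + 1 / 2) (m / 2) 0) := by
        gcongr
        exact betaTail_le_rpow_neg_mul (by norm_num) (by norm_num) (half_pos hm) hx
    _ = K * betaTail (1 / 2) (m / 2) 0 / √x := by
        rw [Real.rpow_neg hx.le, ← Real.sqrt_eq_rpow, zero_add]
        ring

lemma exists_le_div_sq_of_scaledBetaTail_eq (hm : 0 < m) (M : ℝ) :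
    ∃ C, ∀ c ∈ Icc m M, ∀ u ∈ Icc 0 (c / 2), ∀ x, 0 < x → ∀ y, 0 < y →
      scaledBetaTail c u x = y → x ≤ (C / y) ^ 2 := by
  obtain ⟨C, hC⟩ := exists_scaledBetaTail_le_div_sqrt hm M
  refine ⟨C, fun c hc u hu x hx y hy hxy ↦ ?_⟩
  have hy_le : y ≤ C / √x := hxy ▸ hC c hc u hu x hx
  exact (Real.sqrt_le_iff.1 ((le_div_comm₀ hy (Real.sqrt_pos.2 hx)).1 hy_le)).2

end ScaledBetaTail

section Inverses

variable {c a γ : ℝ}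

lemma natCast_mul_Lfun_eq_div {n : ℕ} {x : ℝ} (hn : n ≠ 0) (hx : Lfun c n x = γ / (a * n)) :
    n * Lfun c n x = γ / a := by
  rw [hx]
  field_simp

lemma tendsto_Lfun_inverse {y : ℝ} {g : ℕ → ℝ → ℝ} (hc : 0 < c) (ha : 0 < a) (hγ : 0 < γ)
    (hg : ∀ n, 2 ≤ n → ∀ p ∈ Ioo (0 : ℝ) 1, g n p ∈ Ioo 0 1 ∧ Lfun c n (g n p) = p)
    (hy : y ∈ Ioo 0 1) (hMy : Mfun c a y = γ) :
    Tendsto (fun n : ℕ ↦ g n (γ / (a * n))) atTop (𝓝 y) := by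
  have hlevel : scaledBetaTail c 0 y = γ / a := by
    rw [← hMy, Mfun_eq_mul_scaledBetaTail hc, mul_div_cancel_left₀ _ ha.ne']
  have hinv : ∀ᶠ n : ℕ in atTop,
      g n (γ / (a * n)) ∈ Ioo 0 1 ∧ n * Lfun c n (g n (γ / (a * n))) = γ / a := by
    filter_upwards [eventually_ge_atTop 2,
      tendsto_natCast_atTop_atTop.eventually_gt_atTop (γ / a)] with n hn hγn
    have hp : γ / (a * n) ∈ Ioo 0 1 :=
      ⟨by positivity, by rwa [← div_div, div_lt_one (by positivity)]⟩
    obtain ⟨hmem, heq⟩ := hg n hn _ hp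
    exact ⟨hmem, natCast_mul_Lfun_eq_div (by positivity) heq⟩
  refine tendsto_of_tendsto_apply_of_strictAntiOn (F := fun n x ↦ n * Lfun c n x)
    (isOpen_Ioo.mem_nhds hy) ?_ (strictAntiOn_scaledBetaTail neg_one_lt_zero hc)
    (fun x hx ↦ tendsto_natCast_mul_Lfun hc hx.1) (hinv.mono fun n h ↦ h.1) ?_
  · filter_upwards [eventually_ge_atTop 2] with n hn
    have hn1 : (1 : ℝ) < n := by exact_mod_cast hn
    simp only [natCast_mul_Lfun hc (by positivity : n ≠ 0)]
    exact (strictAntiOn_scaledBetaTail (neg_one_lt_zero.trans (by positivity))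
      (div_lt_self hc hn1)).antitoneOn
  · rw [hlevel]
    exact tendsto_const_nhds.congr' (hinv.mono fun n h ↦ h.2.symm)

lemma exists_forall_inverse_le_div_sq {m : ℝ} (hm : 0 < m) (M : ℝ) (ha : 0 < a) :
    ∃ C, ∀ c ∈ Icc m M, ∀ γ, 0 < γ → ∀ x, 0 < x →
      (Mfun c a x = γ → x ≤ (C / γ) ^ 2) ∧
      ∀ n : ℕ, 2 ≤ n → Lfun c n x = γ / (a * n) → x ≤ (C / γ) ^ 2 := by
  obtain ⟨C, hC⟩ := exists_le_div_sq_of_scaledBetaTail_eq hm M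
  refine ⟨C * a, fun c hc γ hγ x hx ↦ ?_⟩
  have hc0 : 0 < c := hm.trans_le hc.1
  rw [← div_div_eq_mul_div]
  refine ⟨fun hM ↦ ?_, fun n hn hL ↦ ?_⟩
  · refine hC c hc 0 ⟨le_rfl, by positivity⟩ x hx _ (by positivity) ?_
    rw [← hM, Mfun_eq_mul_scaledBetaTail hc0, mul_div_cancel_left₀ _ ha.ne']
  · have hn2 : (2 : ℝ) ≤ n := by exact_mod_cast hn
    refine hC c hc (c / n) ⟨by positivity, by gcongr⟩ x hx _ (by positivity) ?_
    rw [← natCast_mul_Lfun hc0 (by positivity), natCast_mul_Lfun_eq_div (by positivity) hL]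

end Inverses

section LargeNumbers

open ProbabilityTheory

variable {Ω : Type*} [MeasurableSpace Ω] {P : Measure Ω} {X : ℕ → Ω → ℝ}

lemma ae_exists_mul_natCast_le_sum_of_integral_pos (hint : Integrable (X 0) P)
    (hmean : 0 < ∫ ω, X 0 ω ∂P) (hindep : Pairwise fun i j ↦ IndepFun (X i) (X j) P)
    (hident : ∀ i, IdentDistrib (X i) (X 0) P P) :
    ∀ᵐ ω ∂P, ∃ δ, 0 < δ ∧ ∀ᶠ n : ℕ in atTop, δ * n ≤ ∑ j ∈ Finset.range n, X j ω := by
  filter_upwards [strong_law_ae_real X hint hindep hident] with ω hω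
  refine ⟨_, half_pos hmean, ?_⟩
  filter_upwards [hω.eventually_const_lt (half_lt_self hmean), eventually_gt_atTop 0] with n hn hn0
  exact ((lt_div_iff₀ (by positivity)).1 hn).le

lemma ae_exists_mul_natCast_le_sum_of_ae_pos [IsProbabilityMeasure P]
    (hpos : ∀ᵐ ω ∂P, 0 < X 0 ω) (hindep : Pairwise fun i j ↦ IndepFun (X i) (X j) P)
    (hident : ∀ i, IdentDistrib (X i) (X 0) P P) :
    ∀ᵐ ω ∂P, ∃ δ, 0 < δ ∧ ∀ᶠ n : ℕ in atTop, δ * n ≤ ∑ j ∈ Finset.range n, X j ω := by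
  have htrunc : Measurable fun x : ℝ ↦ min x 1 := by fun_prop
  have htrunc_pos : ∀ᵐ ω ∂P, 0 < min (X 0 ω) 1 := hpos.mono fun ω hω ↦ lt_min hω one_pos
  have hint : Integrable (fun ω ↦ min (X 0 ω) 1) P := by
    refine Integrable.of_bound
      (htrunc.comp_aemeasurable (hident 0).aemeasurable_fst).aestronglyMeasurable 1 ?_
    filter_upwards [htrunc_pos] with ω hω
    rw [Real.norm_of_nonneg hω.le]
    exact min_le_right _ _
  have hmean : 0 < ∫ ω, min (X 0 ω) 1 ∂P := by
    rw [integral_pos_iff_support_of_nonneg_ae (htrunc_pos.mono fun ω hω ↦ hω.le) hint]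
    exact pos_iff_ne_zero.2 (frequently_ae_iff.1 (htrunc_pos.mono fun ω hω ↦ hω.ne').frequently)
  filter_upwards [ae_exists_mul_natCast_le_sum_of_integral_pos (X := fun i ω ↦ min (X i ω) 1)
    hint hmean (fun i j hij ↦ (hindep hij).comp htrunc htrunc) fun i ↦ (hident i).comp htrunc]
    with ω ⟨δ, hδ, hle⟩
  exact ⟨δ, hδ, hle.mono fun n hn ↦ hn.trans (Finset.sum_le_sum fun j _ ↦ min_le_left _ _)⟩

lemma ae_pos_expMeasure {r : ℝ} (hr : 0 < r) : ∀ᵐ x ∂expMeasure r, 0 < x := by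
  have := isProbabilityMeasure_expMeasure hr
  have hcdf : (expMeasure r).real (Iic 0) = 0 := by
    rw [← cdf_eq_real, cdf_expMeasure_eq hr]
    simp
  rw [measureReal_eq_zero_iff] at hcdf
  filter_upwards [compl_mem_ae_iff.2 hcdf] with x hx
  exact not_le.1 hx

end LargeNumbers

section Approximation

variable {Z : Type*} {S : Set Z} {c : Z → ℝ} {a m M : ℝ} {Linv : ℕ → Z → ℝ → ℝ} {Minv : Z → ℝ → ℝ}

lemma exists_forall_abs_inverse_le (ha : 0 < a) (hm : 0 < m) (hc : ∀ z ∈ S, c z ∈ Icc m M)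
    (hLinv : ∀ n, 2 ≤ n → ∀ z ∈ S, ∀ p ∈ Ioo (0 : ℝ) 1,
      Linv n z p ∈ Ioo 0 1 ∧ Lfun (c z) n (Linv n z p) = p)
    (hLinv0 : ∀ n, 2 ≤ n → ∀ z ∈ S, ∀ p, 1 ≤ p → Linv n z p = 0)
    (hMinv : ∀ z ∈ S, ∀ γ, 0 < γ → Minv z γ ∈ Ioo 0 1 ∧ Mfun (c z) a (Minv z γ) = γ) :
    ∃ C, ∀ z ∈ S, ∀ γ, 0 < γ → |Minv z γ| ≤ (C / γ) ^ 2 ∧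
      ∀ n : ℕ, 2 ≤ n → |Linv n z (γ / (a * n))| ≤ (C / γ) ^ 2 := by
  obtain ⟨C, hC⟩ := exists_forall_inverse_le_div_sq hm M ha
  refine ⟨C, fun z hz γ hγ ↦ ⟨?_, fun n hn ↦ ?_⟩⟩
  · obtain ⟨hmem, heq⟩ := hMinv z hz γ hγ
    rw [abs_of_pos hmem.1]
    exact (hC (c z) (hc z hz) γ hγ _ hmem.1).1 heq
  · rcases le_or_gt 1 (γ / (a * n)) with hp | hp
    · rw [hLinv0 n hn z hz _ hp, abs_zero]
      positivity
    · obtain ⟨hmem, heq⟩ := hLinv n hn z hz _ ⟨by positivity, hp⟩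
      rw [abs_of_pos hmem.1]
      exact (hC (c z) (hc z hz) γ hγ _ hmem.1).2 n hn heq

theorem beta_process_finite_approximation_general
    {Ω : Type*} [MeasurableSpace Ω] {P : Measure Ω} [IsProbabilityMeasure P]
    (ha : 0 < a) (hm : 0 < m) (hc : ∀ z ∈ S, c z ∈ Icc m M)
    {θ : ℕ → Ω → Z} {E : ℕ → Ω → ℝ} (hθ : ∀ i, ∀ᵐ ω ∂P, θ i ω ∈ S)
    (hEpos : ∀ᵐ ω ∂P, 0 < E 0 ω)
    (hEindep : Pairwise fun i j ↦ ProbabilityTheory.IndepFun (E i) (E j) P)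
    (hEident : ∀ i, ProbabilityTheory.IdentDistrib (E i) (E 0) P P)
    (hLinv : ∀ n, 2 ≤ n → ∀ z ∈ S, ∀ p ∈ Ioo (0 : ℝ) 1,
      Linv n z p ∈ Ioo 0 1 ∧ Lfun (c z) n (Linv n z p) = p)
    (hLinv0 : ∀ n, 2 ≤ n → ∀ z ∈ S, ∀ p, 1 ≤ p → Linv n z p = 0)
    (hMinv : ∀ z ∈ S, ∀ γ, 0 < γ → Minv z γ ∈ Ioo 0 1 ∧ Mfun (c z) a (Minv z γ) = γ) :
    ∀ᵐ ω ∂P, ∀ (f : Z → ℝ) (K : ℝ), (∀ z, |f z| ≤ K) →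
      Summable (fun i ↦ Minv (θ i ω) (∑ j ∈ Finset.range (i + 1), E j ω) * f (θ i ω)) ∧
      Tendsto (fun n : ℕ ↦ ∑ i ∈ Finset.range n,
          Linv n (θ i ω) ((∑ j ∈ Finset.range (i + 1), E j ω) / (a * n)) * f (θ i ω)) atTop
        (𝓝 (∑' i, Minv (θ i ω) (∑ j ∈ Finset.range (i + 1), E j ω) * f (θ i ω))) := by
  obtain ⟨C, hC⟩ := exists_forall_abs_inverse_le ha hm hc hLinv hLinv0 hMinv
  have hEpos_all (i : ℕ) : ∀ᵐ ω ∂P, 0 < E i ω :=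
    (hEident i).symm.ae_snd (p := fun x ↦ 0 < x) measurableSet_Ioi hEpos
  filter_upwards [ae_all_iff.2 hθ, ae_all_iff.2 hEpos_all,
    ae_exists_mul_natCast_le_sum_of_ae_pos hEpos hEindep hEident]
    with ω hθω hEω ⟨δ, hδ, hgrowth⟩ f K hf
  have hγ (i : ℕ) : 0 < ∑ j ∈ Finset.range (i + 1), E j ω :=
    Finset.sum_pos (fun j _ ↦ hEω j) Finset.nonempty_range_add_one
  have hbound : Summable fun i ↦ (C / ∑ j ∈ Finset.range (i + 1), E j ω) ^ 2 * K :=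
    ((summable_nat_add_iff 1).2 (summable_div_sq_of_eventually_mul_le C hδ hgrowth)).mul_right K
  have hnorm {x y b : ℝ} (hx : |x| ≤ b) (hy : |y| ≤ K) : ‖x * y‖ ≤ b * K :=
    norm_mul_le_of_le hx hy
  refine ⟨hbound.of_norm_bounded fun i ↦ hnorm (hC _ (hθω i) _ (hγ i)).1 (hf _),
    tendsto_sum_range_of_dominated hbound (fun i ↦ ?_) ?_⟩
  · obtain ⟨hmem, heq⟩ := hMinv _ (hθω i) _ (hγ i)
    exact (tendsto_Lfun_inverse (g := fun n ↦ Linv n (θ i ω)) (hm.trans_le (hc _ (hθω i)).1) ha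
      (hγ i) (fun n hn ↦ hLinv n hn _ (hθω i)) hmem heq).mul_const _
  · filter_upwards [eventually_ge_atTop 2] with n hn i
    exact hnorm ((hC _ (hθω i) _ (hγ i)).2 n hn) (hf _)

end Approximation

/-- almost surely, the Wolpert–Ickstadt series `A(t)` converges for every
`t ∈ [0, t₀]` and the finite approximations `Aₙ` converge vaguely to `A`, i.e.
`Aₙ(t) → A(t)` at every continuity point `t` of the nondecreasing function `A`. -/
theorem beta_process_finite_approximation
    {Ω : Type*} [MeasurableSpace Ω] (P : Measure Ω) [IsProbabilityMeasure P]
    (t₀ : ℝ) (ht₀ : 0 < t₀)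
    (η : Measure ℝ) [IsFiniteMeasure η]
    (hsupp : η (Set.Icc 0 t₀)ᶜ = 0) (hatom : ∀ x : ℝ, η {x} = 0)
    (a : ℝ) (ha : a = (η Set.univ).toReal) (hapos : 0 < a)
    (c : ℝ → ℝ) (hccont : ContinuousOn c (Set.Icc 0 t₀))
    (hcpos : ∀ z ∈ Set.Icc (0 : ℝ) t₀, 0 < c z)
    (θ E : ℕ → Ω → ℝ)
    (hθmeas : ∀ i, Measurable (θ i)) (hEmeas : ∀ i, Measurable (E i))
    (hθlaw : ∀ i, P.map (θ i) = (η Set.univ)⁻¹ • η)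
    (hElaw : ∀ i, P.map (E i) = ProbabilityTheory.expMeasure 1)
    (hindep : ProbabilityTheory.iIndepFun (m := fun _ : ℕ ⊕ ℕ => Real.measurableSpace)
      (Sum.elim θ E) P)
    (Linv : ℕ → ℝ → ℝ → ℝ) (Minv : ℝ → ℝ → ℝ)
    (hLinv : ∀ n : ℕ, 2 ≤ n → ∀ z ∈ Set.Icc (0 : ℝ) t₀, ∀ p ∈ Set.Ioo (0 : ℝ) 1,
      Linv n z p ∈ Set.Ioo (0 : ℝ) 1 ∧ Lfun (c z) n (Linv n z p) = p)
    (hLinv0 : ∀ (n : ℕ) (z p : ℝ), (1 : ℝ) ≤ p → Linv n z p = 0)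
    (hMinv : ∀ z ∈ Set.Icc (0 : ℝ) t₀, ∀ γ : ℝ, 0 < γ →
      Minv z γ ∈ Set.Ioo (0 : ℝ) 1 ∧ Mfun (c z) a (Minv z γ) = γ) :
    ∀ᵐ ω ∂P,
      (∀ t ∈ Set.Icc (0 : ℝ) t₀, Summable (fun i : ℕ =>
          if θ i ω ≤ t then Minv (θ i ω) (∑ j ∈ Finset.range (i + 1), E j ω) else 0)) ∧
      (∀ t ∈ Set.Icc (0 : ℝ) t₀,
        ContinuousAt (fun s : ℝ => ∑' i : ℕ,
            if θ i ω ≤ s then Minv (θ i ω) (∑ j ∈ Finset.range (i + 1), E j ω) else 0) t →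
        Tendsto (fun n : ℕ => ∑ i ∈ Finset.range n,
            if θ i ω ≤ t then
              Linv n (θ i ω) ((∑ j ∈ Finset.range (i + 1), E j ω) / (a * n)) else 0)
          atTop (nhds (∑' i : ℕ,
            if θ i ω ≤ t then Minv (θ i ω) (∑ j ∈ Finset.range (i + 1), E j ω) else 0))) := by
  obtain ⟨m, M, hm, hc⟩ := exists_pos_forall_mem_Icc_of_isCompact isCompact_Icc hccont hcpos
  have hθ_mem : ∀ i, ∀ᵐ ω ∂P, θ i ω ∈ Icc 0 t₀ := fun i ↦
    ae_of_ae_map (hθmeas i).aemeasurable (hθlaw i ▸ Measure.ae_smul_measure hsupp _)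
  have hE_pos : ∀ᵐ ω ∂P, 0 < E 0 ω :=
    ae_of_ae_map (hEmeas 0).aemeasurable (hElaw 0 ▸ ae_pos_expMeasure one_pos)
  have hE_indep : Pairwise fun i j ↦ ProbabilityTheory.IndepFun (E i) (E j) P := fun i j hij ↦
    hindep.indepFun (Sum.inr_injective.ne hij)
  filter_upwards [beta_process_finite_approximation_general hapos hm hc hθ_mem hE_pos hE_indep
    (fun i ↦ ⟨(hEmeas i).aemeasurable, (hEmeas 0).aemeasurable, (hElaw i).trans (hElaw 0).symm⟩)
    hLinv (fun n _ z _ ↦ hLinv0 n z) hMinv] with ω hω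
  have hstep (t s : ℝ) : |if s ≤ t then (1 : ℝ) else 0| ≤ 1 := by split_ifs <;> simp
  exact ⟨fun t _ ↦ by simpa only [mul_boole] using (hω _ 1 (hstep t)).1,
    fun t _ _ ↦ by simpa only [mul_boole] using (hω _ 1 (hstep t)).2⟩
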